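/- arXiv:1402.6537 — 2 statements merged into one kernel-verified Lean document; each statement's English description precedes it below -/
import Mathlib

section
/- Define δ^reject_Δt(q,G,u) = 1_{u > R_Δt(q, q − Δt∇V(q) + √(2Δt)G)} · (√(2Δt) G − Δt ∇V(q)). Then there exists K > 0 such that |δ^reject_Δt(q,G,u)| ≤ K(1 + √Δt |G|) for all 0 < Δt ≤ 1, q, G ∈ ℝⁿ and u ∈ [0,1]; and for every p > 0 there exist C_p ≥ 0 and Δt* > 0 such that for all 0 < Δt ≤ Δt* and all q ∈ ℝⁿ, E_{G,U}|δ^reject_Δt(q,G,U)|^p ≤ C_p Δt^{(p+3)/2}. -/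
/-!
Write `h = q' - q` for the proposed displacement. After cancellation, the logarithm of the
Metropolis ratio is the error of the trapezoidal rule for `V` along the segment from `q` to `q'`,
which is `O(‖h‖³)`, plus `dt / 4 * (‖∇V q‖² - ‖∇V q'‖²)`, which is `O(dt * ‖h‖)`; the constants
are uniform because the derivatives of a smooth periodic function are bounded. Since
`‖h‖ = O(√dt * (1 + ‖g‖))`, a proposal is rejected with probability `O((√dt * (1 + ‖g‖))³)`, and
integrating over `u` multiplies `‖h‖ ^ p` by exactly this probability. The finite Gaussian moments
of `(1 + ‖g‖) ^ (p + 3)` then give the order `dt ^ ((p + 3) / 2)`.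
-/

open MeasureTheory RealInnerProductSpace

noncomputable section

abbrev En (n : ℕ) := EuclideanSpace ℝ (Fin n)

/-- Gaussian proposal density of the Euler–Maruyama scheme. -/
def Tker {n : ℕ} (V : En n → ℝ) (dt : ℝ) (q q' : En n) : ℝ :=
  (4 * Real.pi * dt) ^ (-(n : ℝ) / 2) *
    Real.exp (-‖q' - q + dt • gradient V q‖ ^ 2 / (4 * dt))

/-- Metropolis acceptance probability. -/
def Rk {n : ℕ} (V : En n → ℝ) (dt : ℝ) (q q' : En n) : ℝ :=
  min 1 (Real.exp (-V q') * Tker V dt q' q / (Real.exp (-V q) * Tker V dt q q'))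

/-- proposal move -/
def propMove {n : ℕ} (V : En n → ℝ) (dt : ℝ) (q g : En n) : En n :=
  q - dt • gradient V q + Real.sqrt (2 * dt) • g

def xi {n : ℕ} (V : En n → ℝ) (q g : En n) : ℝ :=
  -(Real.sqrt 2 / 6) * iteratedFDeriv ℝ 3 V q (fun _ => g) +
    (Real.sqrt 2 / 2) * ⟪gradient V q, fderiv ℝ (gradient V) q g⟫

def xiPlus {n : ℕ} (V : En n → ℝ) (q g : En n) : ℝ := max (xi V q g) 0

/-- standard Gaussian measure on ℝⁿ -/
def gauss (n : ℕ) : Measure (En n) :=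
  volume.withDensity fun g =>
    ENNReal.ofReal ((2 * Real.pi) ^ (-(n : ℝ) / 2) * Real.exp (-‖g‖ ^ 2 / 2))

/-- fundamental domain of the torus -/
def Box (n : ℕ) (L : ℝ) : Set (En n) := {q | ∀ i, q i ∈ Set.Ico (0 : ℝ) L}

/-- integral with respect to the Gibbs measure μ on the torus M -/
def muInt {n : ℕ} (V : En n → ℝ) (L : ℝ) (f : En n → ℝ) : ℝ :=
  (∫ q in Box n L, Real.exp (-V q))⁻¹ * ∫ q in Box n L, f q * Real.exp (-V q)

/-- Laplacian -/
def lap {n : ℕ} (ψ : En n → ℝ) (q : En n) : ℝ :=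
  ∑ i, iteratedFDeriv ℝ 2 ψ q (fun _ => EuclideanSpace.single i (1 : ℝ))

/-- generator of the overdamped Langevin dynamics -/
def gen {n : ℕ} (V ψ : En n → ℝ) (q : En n) : ℝ :=
  -⟪gradient V q, gradient ψ q⟫ + lap ψ q

/-- MALA transition operator on periodic functions -/
def Pmala {n : ℕ} (V : En n → ℝ) (dt : ℝ) (f : En n → ℝ) (q : En n) : ℝ :=
  f q + ∫ q', Rk V dt q q' * Tker V dt q q' * (f q' - f q)

/-- the operator D₁ -/
def D1op {n : ℕ} (V ψ : En n → ℝ) (q : En n) : ℝ :=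
  2 * ∑ i, ∑ j, (iteratedFDeriv ℝ 2 V q ![EuclideanSpace.single i (1:ℝ), EuclideanSpace.single j (1:ℝ)]) *
      (iteratedFDeriv ℝ 2 ψ q ![EuclideanSpace.single i (1:ℝ), EuclideanSpace.single j (1:ℝ)])
    + ⟪gradient (fun x => lap V x) q, gradient ψ q⟫
    - ⟪gradient V q, fderiv ℝ (gradient V) q (gradient ψ q)⟫

/-- the operator D₂ -/
def D2op {n : ℕ} (V ψ : En n → ℝ) (q : En n) : ℝ :=
  -Real.sqrt 2 * ⟪∫ g, xiPlus V q g • g ∂(gauss n), gradient ψ q⟫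

/-- the operator A appearing in the expansion of the MALA evolution operator -/
def Aop {n : ℕ} (V ψ : En n → ℝ) (q : En n) : ℝ :=
  (gen V (gen V ψ) q + D1op V ψ q + D2op V ψ q) / 2

/-- Metropolized increment -/
def deltaInc {n : ℕ} (V : En n → ℝ) (dt : ℝ) (q g : En n) (u : ℝ) : En n :=
  if u ≤ Rk V dt q (propMove V dt q g) then (-dt) • gradient V q + Real.sqrt (2 * dt) • g
  else 0

/-- expectation over G (std Gaussian) and U (uniform on [0,1]) of the increment -/
def EguDelta {n : ℕ} (V : En n → ℝ) (dt : ℝ) (q : En n) : En n :=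
  ∫ g, (∫ u in Set.Icc (0 : ℝ) 1, deltaInc V dt q g u) ∂(gauss n)


def deltaRej {n : ℕ} (V : En n → ℝ) (dt : ℝ) (q g : En n) (u : ℝ) : En n :=
  if Rk V dt q (propMove V dt q g) < u then Real.sqrt (2 * dt) • g - dt • gradient V q
  else 0

/-! ### The trapezoidal rule along a segment -/

section Trapezoid

variable {E F : Type*} [NormedAddCommGroup E] [NormedSpace ℝ E]
  [NormedAddCommGroup F] [NormedSpace ℝ F]

lemma norm_iteratedDeriv_comp_add_smul_le {f : E → F} {k : ℕ} (hf : ContDiff ℝ k f) (x h : E)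
    (t : ℝ) :
    ‖iteratedDeriv k (fun s : ℝ ↦ f (x + s • h)) t‖ ≤
      ‖iteratedFDeriv ℝ k f (x + t • h)‖ * ‖h‖ ^ k := by
  have hcomp := (ContinuousLinearMap.toSpanSingleton ℝ h).iteratedFDeriv_comp_right
    (f := fun y ↦ f (x + y)) (hf.comp (contDiff_const.add contDiff_id)) t le_rfl
  have hline : (fun y ↦ f (x + y)) ∘ ContinuousLinearMap.toSpanSingleton ℝ h =
      fun s : ℝ ↦ f (x + s • h) := rfl
  rw [hline, iteratedFDeriv_comp_add_left] at hcomp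
  rw [← norm_iteratedFDeriv_eq_norm_iteratedDeriv, hcomp]
  refine (ContinuousMultilinearMap.norm_compContinuousLinearMap_le _ _).trans_eq ?_
  simp

lemma abs_trapezoidal_error_le_of_iteratedDeriv {f : ℝ → ℝ} (hf : ContDiff ℝ 2 f) {a b ζ : ℝ}
    (hζ : ∀ t, |iteratedDeriv 2 f t| ≤ ζ) {N : ℕ} (hN : 0 < N) :
    |trapezoidal_error f N a b| ≤ |b - a| ^ 3 * ζ / (12 * N ^ 2) := by
  rcases eq_or_ne a b with rfl | hab
  · simp
  refine trapezoidal_error_le_of_c2 hf.contDiffOn (fun t ↦ ?_) hN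
  by_cases ht : t ∈ Set.uIcc a b
  · rw [iteratedDerivWithin_eq_iteratedDeriv (uniqueDiffOn_uIcc hab) hf.contDiffAt ht]
    exact hζ t
  · rw [iteratedDerivWithin_succ, derivWithin_zero_of_notMem_closure
      (by rwa [isCompact_uIcc.isClosed.closure_eq]), abs_zero]
    exact (abs_nonneg _).trans (hζ t)

/-- The signed error of the one-step trapezoidal rule for the integral of the derivative of `f`
along the segment from `x` to `x + h`. -/
def trapezoidDefect (f : E → ℝ) (x h : E) : ℝ :=
  (fderiv ℝ f x h + fderiv ℝ f (x + h) h) / 2 - (f (x + h) - f x)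

lemma trapezoidDefect_eq_trapezoidal_error {f : E → ℝ} (hf : ContDiff ℝ 1 f) (x h : E) :
    trapezoidDefect f x h = trapezoidal_error (fun t ↦ fderiv ℝ f (x + t • h) h) 1 0 1 := by
  have hline (t : ℝ) : HasDerivAt (fun t : ℝ ↦ x + t • h) h t := by
    simpa using ((hasDerivAt_id t).smul_const h).const_add x
  have hderiv (t : ℝ) : HasDerivAt (fun t : ℝ ↦ f (x + t • h)) (fderiv ℝ f (x + t • h) h) t :=
    (hf.differentiable one_ne_zero _).hasFDerivAt.comp_hasDerivAt t (hline t)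
  have hcont : Continuous fun t : ℝ ↦ fderiv ℝ f (x + t • h) h :=
    ((hf.continuous_fderiv one_ne_zero).comp (by fun_prop)).clm_apply continuous_const
  have hftc : ∫ t in (0 : ℝ)..1, fderiv ℝ f (x + t • h) h = f (x + h) - f x := by
    simpa using intervalIntegral.integral_eq_sub_of_hasDerivAt (fun t _ ↦ hderiv t)
      (hcont.intervalIntegrable 0 1)
  rw [trapezoidal_error, trapezoidal_integral_one, hftc, trapezoidDefect]
  simp only [zero_smul, one_smul, add_zero]
  ring

lemma abs_trapezoidDefect_le {f : E → ℝ} (hf : ContDiff ℝ 3 f) {M : ℝ}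
    (hM : ∀ x, ‖iteratedFDeriv ℝ 3 f x‖ ≤ M) (x h : E) :
    |trapezoidDefect f x h| ≤ M / 12 * ‖h‖ ^ 3 := by
  have hf' : ContDiff ℝ 2 fun y ↦ fderiv ℝ f y h :=
    (hf.fderiv_right (m := 2) (by norm_num)).clm_apply contDiff_const
  have hbound (t : ℝ) :
      |iteratedDeriv 2 (fun s : ℝ ↦ fderiv ℝ f (x + s • h) h) t| ≤ M * ‖h‖ ^ 3 :=
    calc _ ≤ ‖iteratedFDeriv ℝ 2 (fun y ↦ fderiv ℝ f y h) (x + t • h)‖ * ‖h‖ ^ 2 :=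
          norm_iteratedDeriv_comp_add_smul_le hf' x h t
      _ ≤ ‖h‖ * ‖iteratedFDeriv ℝ 2 (fderiv ℝ f) (x + t • h)‖ * ‖h‖ ^ 2 := by
          gcongr
          exact norm_iteratedFDeriv_clm_apply_const
            (hf.fderiv_right (m := 2) (by norm_num)).contDiffAt le_rfl
      _ = ‖iteratedFDeriv ℝ 3 f (x + t • h)‖ * ‖h‖ ^ 3 := by
          rw [norm_iteratedFDeriv_fderiv]
          ring
      _ ≤ M * ‖h‖ ^ 3 := by
          gcongr
          exact hM _
  rw [trapezoidDefect_eq_trapezoidal_error (hf.of_le (by norm_num))]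
  refine (abs_trapezoidal_error_le_of_iteratedDeriv (hf'.comp (by fun_prop)) hbound
    one_pos).trans_eq ?_
  norm_num
  ring

end Trapezoid

/-! ### Derivatives of periodic functions -/

section Periodic

lemma periodic_of_mem_span_int {α β : Type*} [AddCommGroup α] {f : α → β} {S : Set α}
    (hS : ∀ v ∈ S, Function.Periodic f v) {v : α} (hv : v ∈ Submodule.span ℤ S) :
    Function.Periodic f v := by
  induction hv using Submodule.span_induction with
  | mem v hv => exact hS v hv
  | zero => exact Function.periodic_with_period_zero f
  | add v w _ _ hv hw => exact hv.add_period hw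
  | smul k v _ hv => exact hv.zsmul k

variable {ι E F : Type*} [Finite ι] [NormedAddCommGroup E] [NormedSpace ℝ E]
  [NormedAddCommGroup F]

lemma exists_norm_le_of_periodic (b : Module.Basis ι ℝ E) {f : E → F} (hf : Continuous f)
    (hper : ∀ i, Function.Periodic f (b i)) : ∃ M, ∀ x, ‖f x‖ ≤ M := by
  have := Fintype.ofFinite ι
  have := Module.Finite.of_basis b
  have := FiniteDimensional.proper_real E
  obtain ⟨M, hM⟩ := (ZSpan.fundamentalDomain_isBounded b).isCompact_closure
    |>.exists_bound_of_continuousOn hf.continuousOn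
  refine ⟨M, fun x ↦ ?_⟩
  have hfract : f (ZSpan.fract b x) = f x :=
    (periodic_of_mem_span_int (Set.forall_mem_range.2 hper) (ZSpan.floor b x).2).sub_eq x
  rw [← hfract]
  exact hM _ (subset_closure (ZSpan.fract_mem_fundamentalDomain b x))

lemma exists_norm_iteratedFDeriv_le_of_periodic [NormedSpace ℝ F] (b : Module.Basis ι ℝ E)
    {f : E → F} {k : ℕ} (hf : ContDiff ℝ k f) (hper : ∀ i, Function.Periodic f (b i)) :
    ∃ M, ∀ x, ‖iteratedFDeriv ℝ k f x‖ ≤ M := by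
  refine exists_norm_le_of_periodic b (hf.continuous_iteratedFDeriv le_rfl) fun i x ↦ ?_
  rw [← iteratedFDeriv_comp_add_right, (hper i).funext]

lemma exists_norm_iteratedFDeriv_le_of_periodic_single {n : ℕ} {L : ℝ} (hL : L ≠ 0)
    {F : Type*} [NormedAddCommGroup F] [NormedSpace ℝ F] {f : En n → F} {k : ℕ}
    (hf : ContDiff ℝ k f)
    (hper : ∀ (q : En n) (i : Fin n), f (q + L • EuclideanSpace.single i (1 : ℝ)) = f q) :
    ∃ M, ∀ x, ‖iteratedFDeriv ℝ k f x‖ ≤ M := by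
  refine exists_norm_iteratedFDeriv_le_of_periodic
    ((EuclideanSpace.basisFun (Fin n) ℝ).toBasis.isUnitSMul fun _ ↦ hL.isUnit) hf fun i q ↦ ?_
  rw [Module.Basis.isUnitSMul_apply, OrthonormalBasis.coe_toBasis, EuclideanSpace.basisFun_apply]
  exact hper q i

end Periodic

/-! ### Gaussian moments -/

lemma one_add_rpow_mul_exp_neg_mul_sq_le {b s : ℝ} (hb : 0 < b) (hs : 0 ≤ s) {r : ℝ}
    (hr : 0 ≤ r) :
    (1 + r) ^ s * Real.exp (-b * r ^ 2) ≤
      Real.exp (s ^ 2 / (2 * b)) * Real.exp (-(b / 2) * r ^ 2) := by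
  have hpow : (1 + r) ^ s ≤ Real.exp (r * s) := by
    rw [Real.exp_mul, add_comm]
    exact Real.rpow_le_rpow (by positivity) (Real.add_one_le_exp r) hs
  have hyoung : r * s ≤ s ^ 2 / (2 * b) + b / 2 * r ^ 2 := by
    have hsq : s ^ 2 / (2 * b) + b / 2 * r ^ 2 - r * s = (s - b * r) ^ 2 / (2 * b) := by
      field_simp
      ring
    linarith [show 0 ≤ (s - b * r) ^ 2 / (2 * b) by positivity]
  calc (1 + r) ^ s * Real.exp (-b * r ^ 2)
      ≤ Real.exp (r * s) * Real.exp (-b * r ^ 2) := by gcongr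
    _ = Real.exp (r * s + -b * r ^ 2) := (Real.exp_add _ _).symm
    _ ≤ Real.exp (s ^ 2 / (2 * b) + -(b / 2) * r ^ 2) := Real.exp_le_exp.2 (by linarith)
    _ = _ := Real.exp_add _ _

lemma integrable_one_add_norm_rpow_mul_exp_neg_mul_sq {E : Type*} [NormedAddCommGroup E]
    [InnerProductSpace ℝ E] [FiniteDimensional ℝ E] [MeasurableSpace E] [BorelSpace E]
    {b s : ℝ} (hb : 0 < b) (hs : 0 ≤ s) :
    Integrable fun x : E ↦ (1 + ‖x‖) ^ s * Real.exp (-b * ‖x‖ ^ 2) := by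
  have hgauss : Integrable fun x : E ↦ Real.exp (-(b / 2) * ‖x‖ ^ 2) :=
    .of_integral_ne_zero <| by
      rw [GaussianFourier.integral_rexp_neg_mul_sq_norm (half_pos hb)]
      positivity
  refine (hgauss.const_mul (Real.exp (s ^ 2 / (2 * b)))).mono' (by fun_prop)
    (.of_forall fun x ↦ ?_)
  rw [Real.norm_of_nonneg (by positivity)]
  exact one_add_rpow_mul_exp_neg_mul_sq_le hb hs (norm_nonneg x)

lemma integrable_one_add_norm_rpow_gauss (n : ℕ) {s : ℝ} (hs : 0 ≤ s) :
    Integrable (fun g ↦ (1 + ‖g‖) ^ s) (gauss n) := by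
  rw [gauss, integrable_withDensity_iff_integrable_smul' (by fun_prop) (by simp)]
  refine ((integrable_one_add_norm_rpow_mul_exp_neg_mul_sq one_half_pos hs).const_mul
    ((2 * Real.pi) ^ (-(n : ℝ) / 2))).congr (.of_forall fun g ↦ ?_)
  beta_reduce
  rw [ENNReal.toReal_ofReal (by positivity), smul_eq_mul,
    show -‖g‖ ^ 2 / 2 = -(1 / 2) * ‖g‖ ^ 2 by ring]
  ring

/-! ### The Metropolis ratio -/

section Gradient

variable {E : Type*} [NormedAddCommGroup E] [InnerProductSpace ℝ E] [CompleteSpace E]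

lemma norm_gradient_eq_norm_iteratedFDeriv_one (f : E → ℝ) (x : E) :
    ‖gradient f x‖ = ‖iteratedFDeriv ℝ 1 f x‖ := by
  rw [norm_iteratedFDeriv_one, gradient, LinearIsometryEquiv.norm_map]

lemma norm_gradient_sub_gradient_le {f : E → ℝ} (hf : ContDiff ℝ 2 f) {M : ℝ}
    (hM : ∀ x, ‖iteratedFDeriv ℝ 2 f x‖ ≤ M) (x y : E) :
    ‖gradient f x - gradient f y‖ ≤ M * ‖x - y‖ := by
  have hf' : Differentiable ℝ (fderiv ℝ f) :=
    (hf.fderiv_right (m := 1) (by norm_num)).differentiable one_ne_zero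
  have hbound (z : E) : ‖fderiv ℝ (fderiv ℝ f) z‖ ≤ M := by
    rw [← norm_iteratedFDeriv_one, norm_iteratedFDeriv_fderiv]
    exact hM z
  rw [gradient, gradient, ← map_sub, LinearIsometryEquiv.norm_map]
  exact convex_univ.norm_image_sub_le_of_norm_fderiv_le (fun z _ ↦ hf' z) (fun z _ ↦ hbound z)
    (Set.mem_univ y) (Set.mem_univ x)

end Gradient

lemma abs_norm_sq_sub_norm_sq_le {E : Type*} [SeminormedAddCommGroup E] {u v : E} {M : ℝ}
    (hu : ‖u‖ ≤ M) (hv : ‖v‖ ≤ M) : |‖u‖ ^ 2 - ‖v‖ ^ 2| ≤ 2 * M * ‖u - v‖ := by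
  rw [sq_sub_sq, abs_mul, abs_of_nonneg (by positivity)]
  exact mul_le_mul (by linarith) (abs_norm_sub_norm_le u v) (abs_nonneg _)
    (by linarith [norm_nonneg u])

lemma one_sub_min_one_exp_le_abs (x : ℝ) : 1 - min 1 (Real.exp x) ≤ |x| := by
  rcases le_total 1 (Real.exp x) with h | h
  · simp [min_eq_left h]
  · rw [min_eq_right h]
    linarith [Real.add_one_le_exp x, neg_abs_le x]

section Metropolis

variable {n : ℕ} {V : En n → ℝ} {dt : ℝ}

lemma Rk_add_eq_min_one_exp (V : En n → ℝ) (hdt : 0 < dt) (q h : En n) :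
    Rk V dt q (q + h) = min 1 (Real.exp
      (trapezoidDefect V q h +
        dt / 4 * (‖gradient V q‖ ^ 2 - ‖gradient V (q + h)‖ ^ 2))) := by
  have hnorm_bwd : ‖q - (q + h) + dt • gradient V (q + h)‖ ^ 2 =
      dt ^ 2 * ‖gradient V (q + h)‖ ^ 2 - 2 * (dt * fderiv ℝ V (q + h) h) + ‖h‖ ^ 2 := by
    rw [show q - (q + h) + dt • gradient V (q + h) = dt • gradient V (q + h) - h by abel,
      norm_sub_sq_real, real_inner_smul_left, inner_gradient_left, norm_smul, mul_pow,
      Real.norm_eq_abs, sq_abs]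
  have hnorm_fwd : ‖q + h - q + dt • gradient V q‖ ^ 2 =
      dt ^ 2 * ‖gradient V q‖ ^ 2 + 2 * (dt * fderiv ℝ V q h) + ‖h‖ ^ 2 := by
    rw [show q + h - q + dt • gradient V q = dt • gradient V q + h by abel,
      norm_add_sq_real, real_inner_smul_left, inner_gradient_left, norm_smul, mul_pow,
      Real.norm_eq_abs, sq_abs]
  have hconst : (4 * Real.pi * dt) ^ (-(n : ℝ) / 2) ≠ 0 := by positivity
  rw [Rk, Tker, Tker, hnorm_bwd, hnorm_fwd, mul_left_comm, mul_left_comm (Real.exp (-V q)),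
    mul_div_mul_left _ _ hconst, ← Real.exp_add, ← Real.exp_add, ← Real.exp_sub, trapezoidDefect]
  congr 2
  field_simp
  ring

lemma Rk_nonneg (V : En n → ℝ) (hdt : 0 ≤ dt) (q q' : En n) : 0 ≤ Rk V dt q q' := by
  unfold Rk Tker
  positivity

lemma one_sub_Rk_add_le (hV : ContDiff ℝ 3 V) {M : ℕ → ℝ}
    (hM : ∀ k ∈ Finset.Icc 1 3, ∀ x, ‖iteratedFDeriv ℝ k V x‖ ≤ M k) (hdt : 0 < dt)
    (q h : En n) :
    1 - Rk V dt q (q + h) ≤ M 3 / 12 * ‖h‖ ^ 3 + dt * (M 1 * M 2 / 2) * ‖h‖ := by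
  have hgrad (x : En n) : ‖gradient V x‖ ≤ M 1 :=
    (norm_gradient_eq_norm_iteratedFDeriv_one V x).trans_le (hM 1 (by simp) x)
  have hgrad_nonneg : 0 ≤ M 1 := (norm_nonneg _).trans (hgrad q)
  have hlip : ‖gradient V q - gradient V (q + h)‖ ≤ M 2 * ‖h‖ := by
    simpa using
      norm_gradient_sub_gradient_le (hV.of_le (by norm_num)) (hM 2 (by simp)) q (q + h)
  have hdrift : |dt / 4 * (‖gradient V q‖ ^ 2 - ‖gradient V (q + h)‖ ^ 2)| ≤
      dt * (M 1 * M 2 / 2) * ‖h‖ := by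
    rw [abs_mul, abs_of_pos (by positivity)]
    calc _ ≤ dt / 4 * (2 * M 1 * ‖gradient V q - gradient V (q + h)‖) := by
          gcongr
          exact abs_norm_sq_sub_norm_sq_le (hgrad q) (hgrad (q + h))
      _ ≤ dt / 4 * (2 * M 1 * (M 2 * ‖h‖)) := by gcongr
      _ = _ := by ring
  rw [Rk_add_eq_min_one_exp V hdt]
  calc _ ≤ |trapezoidDefect V q h +
        dt / 4 * (‖gradient V q‖ ^ 2 - ‖gradient V (q + h)‖ ^ 2)| :=
        one_sub_min_one_exp_le_abs _
    _ ≤ _ := (abs_add_le _ _).trans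
        (add_le_add (abs_trapezoidDefect_le hV (hM 3 (by simp)) q h) hdrift)

/-! ### Rejected increments -/

/-- The displacement from `q` proposed by the Euler–Maruyama step with Gaussian vector `g`. -/
def increment (V : En n → ℝ) (dt : ℝ) (q g : En n) : En n :=
  √(2 * dt) • g - dt • gradient V q

lemma propMove_eq_add_increment (V : En n → ℝ) (dt : ℝ) (q g : En n) :
    propMove V dt q g = q + increment V dt q g := by
  rw [propMove, increment]
  abel

lemma norm_increment_le {M : ℝ} {q : En n} (hM : ‖gradient V q‖ ≤ M) (hdt : 0 ≤ dt) (g : En n) :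
    ‖increment V dt q g‖ ≤ (√2 + M) * (√dt * ‖g‖ + dt) := by
  have hM₀ : 0 ≤ M := (norm_nonneg _).trans hM
  calc ‖increment V dt q g‖ ≤ √2 * (√dt * ‖g‖) + M * dt := by
        refine (norm_sub_le _ _).trans ?_
        rw [norm_smul, norm_smul, Real.norm_of_nonneg hdt, Real.norm_of_nonneg (by positivity),
          Real.sqrt_mul zero_le_two, mul_assoc, mul_comm M]
        gcongr
    _ ≤ (√2 + M) * (√dt * ‖g‖) + (√2 + M) * dt := by
        gcongr
        · exact le_add_of_nonneg_right hM₀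
        · exact le_add_of_nonneg_left (by positivity)
    _ = _ := by ring

lemma norm_increment_le_mul_sqrt {M : ℝ} {q : En n} (hM : ‖gradient V q‖ ≤ M) (hdt : 0 ≤ dt)
    (hdt₁ : dt ≤ 1) (g : En n) :
    ‖increment V dt q g‖ ≤ (√2 + M) * (√dt * (1 + ‖g‖)) := by
  have hM₀ : 0 ≤ M := (norm_nonneg _).trans hM
  refine (norm_increment_le hM hdt g).trans ?_
  gcongr
  linarith [Real.le_sqrt_self_iff.2 hdt₁]

lemma one_sub_Rk_propMove_le (hV : ContDiff ℝ 3 V) {M : ℕ → ℝ}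
    (hM : ∀ k ∈ Finset.Icc 1 3, ∀ x, ‖iteratedFDeriv ℝ k V x‖ ≤ M k) (hdt : 0 < dt)
    (hdt₁ : dt ≤ 1) (q g : En n) :
    1 - Rk V dt q (propMove V dt q g) ≤
      (M 3 / 12 * (√2 + M 1) ^ 3 + M 1 * M 2 / 2 * (√2 + M 1)) * (√dt * (1 + ‖g‖)) ^ 3 := by
  have hM₀ (k : ℕ) (hk : k ∈ Finset.Icc 1 3) : 0 ≤ M k := (norm_nonneg _).trans (hM k hk q)
  have hM₁ := hM₀ 1 (by simp)
  have hM₂ := hM₀ 2 (by simp)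
  have hM₃ := hM₀ 3 (by simp)
  have hgrad : ‖gradient V q‖ ≤ M 1 :=
    (norm_gradient_eq_norm_iteratedFDeriv_one V q).trans_le (hM 1 (by simp) q)
  have hincr := norm_increment_le_mul_sqrt hgrad hdt.le hdt₁ g
  have hdt_le : dt ≤ (√dt * (1 + ‖g‖)) ^ 2 := by
    rw [mul_pow, Real.sq_sqrt hdt.le]
    exact le_mul_of_one_le_right hdt.le (one_le_pow₀ (by simp))
  rw [propMove_eq_add_increment]
  refine (one_sub_Rk_add_le hV hM hdt q _).trans ?_
  generalize √dt * (1 + ‖g‖) = r at *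
  calc _ ≤ M 3 / 12 * ((√2 + M 1) * r) ^ 3 + r ^ 2 * (M 1 * M 2 / 2) * ((√2 + M 1) * r) := by
        gcongr
    _ = _ := by ring

lemma norm_deltaRej_le (V : En n → ℝ) (dt : ℝ) (q g : En n) (u : ℝ) :
    ‖deltaRej V dt q g u‖ ≤ ‖increment V dt q g‖ := by
  rw [deltaRej, increment]
  split_ifs <;> simp

lemma setIntegral_Icc_norm_ite_rpow {E : Type*} [NormedAddCommGroup E] {R p : ℝ} (hR₀ : 0 ≤ R)
    (hR₁ : R ≤ 1) (hp : p ≠ 0) (x : E) :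
    ∫ u in Set.Icc (0 : ℝ) 1, ‖if R < u then x else 0‖ ^ p = (1 - R) * ‖x‖ ^ p := by
  have hind : (fun u ↦ ‖if R < u then x else 0‖ ^ p) =
      (Set.Ioi R).indicator fun _ ↦ ‖x‖ ^ p := by
    ext u
    by_cases hu : R < u <;> simp [hu, hp]
  have hset : Set.Icc 0 1 ∩ Set.Ioi R = Set.Ioc R 1 := by
    ext u
    simp only [Set.mem_inter_iff, Set.mem_Icc, Set.mem_Ioi, Set.mem_Ioc]
    grind
  rw [hind, setIntegral_indicator measurableSet_Ioi, hset, setIntegral_const,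
    Real.volume_real_Ioc_of_le hR₁, smul_eq_mul]

lemma integral_norm_deltaRej_rpow (V : En n → ℝ) (hdt : 0 ≤ dt) {p : ℝ} (hp : p ≠ 0)
    (q g : En n) :
    ∫ u in Set.Icc (0 : ℝ) 1, ‖deltaRej V dt q g u‖ ^ p =
      (1 - Rk V dt q (propMove V dt q g)) * ‖increment V dt q g‖ ^ p :=
  setIntegral_Icc_norm_ite_rpow (Rk_nonneg V hdt _ _) (min_le_left _ _) hp _

lemma integral_integral_norm_deltaRej_rpow_le {A B p : ℝ} (hA : 0 ≤ A) (hB : 0 ≤ B)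
    (hdt : 0 < dt) (hp : 0 < p) {q : En n}
    (hincr : ∀ g, ‖increment V dt q g‖ ≤ A * (√dt * (1 + ‖g‖)))
    (hrej : ∀ g, 1 - Rk V dt q (propMove V dt q g) ≤ B * (√dt * (1 + ‖g‖)) ^ 3) :
    ∫ g, (∫ u in Set.Icc (0 : ℝ) 1, ‖deltaRej V dt q g u‖ ^ p) ∂(gauss n) ≤
      (B * A ^ p * ∫ g, (1 + ‖g‖) ^ (p + 3) ∂(gauss n)) * dt ^ ((p + 3) / 2) := by
  have hpointwise (g : En n) : ∫ u in Set.Icc (0 : ℝ) 1, ‖deltaRej V dt q g u‖ ^ p ≤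
      B * A ^ p * dt ^ ((p + 3) / 2) * (1 + ‖g‖) ^ (p + 3) :=
    calc _ = (1 - Rk V dt q (propMove V dt q g)) * ‖increment V dt q g‖ ^ p :=
          integral_norm_deltaRej_rpow V hdt.le hp.ne' q g
      _ ≤ B * (√dt * (1 + ‖g‖)) ^ 3 * (A * (√dt * (1 + ‖g‖))) ^ p := by
          gcongr
          exacts [hrej g, hincr g]
      _ = B * A ^ p * (√dt * (1 + ‖g‖)) ^ (p + 3) := by
          rw [Real.mul_rpow hA (by positivity), Real.rpow_add (by positivity),
            Real.rpow_ofNat]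
          ring
      _ = B * A ^ p * dt ^ ((p + 3) / 2) * (1 + ‖g‖) ^ (p + 3) := by
          rw [Real.mul_rpow (by positivity) (by positivity), Real.sqrt_eq_rpow,
            ← Real.rpow_mul hdt.le]
          ring_nf
  calc _ ≤ ∫ g, B * A ^ p * dt ^ ((p + 3) / 2) * (1 + ‖g‖) ^ (p + 3) ∂(gauss n) :=
        integral_mono_of_nonneg (.of_forall fun g ↦ integral_nonneg fun u ↦ by positivity)
          ((integrable_one_add_norm_rpow_gauss n (by positivity)).const_mul _)
          (.of_forall hpointwise)
    _ = _ := by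
        rw [integral_const_mul]
        ring

end Metropolis

theorem stmt13_general {n : ℕ} {V : En n → ℝ} (hV : ContDiff ℝ 3 V)
    (hbdd : ∀ k ∈ Finset.Icc 1 3, ∃ M, ∀ x, ‖iteratedFDeriv ℝ k V x‖ ≤ M) :
    (∃ K > (0 : ℝ), ∀ dt : ℝ, 0 < dt → dt ≤ 1 → ∀ (q g : En n), ∀ u ∈ Set.Icc (0 : ℝ) 1,
        ‖deltaRej V dt q g u‖ ≤ K * (1 + √dt * ‖g‖)) ∧
      ∀ p : ℝ, 0 < p → ∃ C ≥ (0 : ℝ), ∃ dts > (0 : ℝ), ∀ dt : ℝ, 0 < dt → dt ≤ dts →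
        ∀ q : En n,
          ∫ g, (∫ u in Set.Icc (0 : ℝ) 1, ‖deltaRej V dt q g u‖ ^ p) ∂(gauss n) ≤
            C * dt ^ ((p + 3) / 2) := by
  choose! M hM using hbdd
  have hM₀ (k : ℕ) (hk : k ∈ Finset.Icc 1 3) : 0 ≤ M k := (norm_nonneg _).trans (hM k hk 0)
  have hM₁ := hM₀ 1 (by simp)
  have hM₂ := hM₀ 2 (by simp)
  have hM₃ := hM₀ 3 (by simp)
  have hgrad (q : En n) : ‖gradient V q‖ ≤ M 1 :=
    (norm_gradient_eq_norm_iteratedFDeriv_one V q).trans_le (hM 1 (by simp) q)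
  refine ⟨⟨√2 + M 1, by positivity, fun dt hdt hdt₁ q g u _ ↦ ?_⟩, fun p hp ↦
    ⟨_, ?_, 1, one_pos, fun dt hdt hdt₁ q ↦
      integral_integral_norm_deltaRej_rpow_le (by positivity) (by positivity) hdt hp
        (norm_increment_le_mul_sqrt (hgrad q) hdt.le hdt₁)
        (one_sub_Rk_propMove_le hV hM hdt hdt₁ q)⟩⟩
  · refine ((norm_deltaRej_le V dt q g u).trans (norm_increment_le (hgrad q) hdt.le g)).trans ?_
    exact mul_le_mul_of_nonneg_left (by linarith) (by positivity)
  · exact mul_nonneg (by positivity) (integral_nonneg fun g ↦ by positivity)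

theorem stmt13 (n : ℕ) (hn : 1 ≤ n) (L : ℝ) (hL : 0 < L)
    (V : En n → ℝ) (hV : ContDiff ℝ (⊤ : ℕ∞) V)
    (hper : ∀ (q : En n) (i : Fin n), V (q + L • EuclideanSpace.single i (1 : ℝ)) = V q) :
    (∃ K > (0 : ℝ), ∀ dt : ℝ, 0 < dt → dt ≤ 1 → ∀ (q g : En n), ∀ u ∈ Set.Icc (0 : ℝ) 1,
        ‖deltaRej V dt q g u‖ ≤ K * (1 + Real.sqrt dt * ‖g‖)) ∧
      ∀ p : ℝ, 0 < p → ∃ C ≥ (0 : ℝ), ∃ dts > (0 : ℝ), ∀ dt : ℝ, 0 < dt → dt ≤ dts →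
        ∀ q : En n,
          ∫ g, (∫ u in Set.Icc (0 : ℝ) 1, ‖deltaRej V dt q g u‖ ^ p) ∂(gauss n) ≤
            C * dt ^ ((p + 3) / 2) :=
  stmt13_general (contDiff_infty.1 hV 3) fun k _ ↦
    exists_norm_iteratedFDeriv_le_of_periodic_single hL.ne' (contDiff_infty.1 hV k) hper
end
end

section
/- For every Δt > 0, ∫_M E_{G,U}[δ_Δt(q,G,U)] μ(dq) = 0; that is, the average Metropolized increment has vanishing mean with respect to the Gibbs measure. -/
/-!
By the Metropolis rule, the stationary flux of accepted moves
`e^{-V(q)} T(q,q') R(q,q') = min (e^{-V(q)} T(q,q')) (e^{-V(q')} T(q',q))` is symmetric (detailed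
balance). Averaging the increment over `U`, and using that `T(q,·)` is the density of the proposal,
the Gibbs-weighted mean increment at `q` is `∫ K(q,q') dq'`, where the kernel `K`, flux times
`q' - q`, is antisymmetric. It is also invariant under the simultaneous translation of `q` and `q'`
by a period. For the diagonal action of the periods on `ℝⁿ × ℝⁿ`, both `D × ℝⁿ` and `ℝⁿ × D` are
fundamental domains whenever `D` is one in `ℝⁿ`, so `K` has the same integral `I` over both;
exchanging the two variables gives `I = -I`.
-/

open MeasureTheory RealInnerProductSpace

noncomputable section

def muIntV {n : ℕ} (V : En n → ℝ) (L : ℝ) (f : En n → En n) : En n :=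
  (∫ q in Box n L, Real.exp (-V q))⁻¹ • ∫ q in Box n L, Real.exp (-V q) • f q

/-! ### Antisymmetric kernels invariant under a diagonal action -/

section Antisymmetric

variable {G X : Type*} [AddGroup G] [AddAction G X] [MeasurableSpace X]

lemma measurableConstVAdd_prod [MeasurableConstVAdd G X] : MeasurableConstVAdd G (X × X) where
  measurable_const_vadd g :=
    (measurable_fst.const_vadd g).prodMk (measurable_snd.const_vadd g)

lemma vaddInvariantMeasure_prod [MeasurableConstVAdd G X] (μ : Measure X) [SFinite μ]
    [VAddInvariantMeasure G X μ] : VAddInvariantMeasure G (X × X) (μ.prod μ) where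
  measure_preimage_vadd g _ hs :=
    ((measurePreserving_vadd g μ).prod (measurePreserving_vadd g μ)).measure_preimage
      hs.nullMeasurableSet

variable [Countable G] [MeasurableConstVAdd G X] {μ : Measure X} [SFinite μ]
  [VAddInvariantMeasure G X μ] {E : Type*} [NormedAddCommGroup E] [NormedSpace ℝ E] {D : Set X}

theorem setIntegral_prod_univ_eq_univ_prod (hD : IsAddFundamentalDomain G D μ) {K : X × X → E}
    (hK : ∀ (g : G) p, K (g +ᵥ p) = K p) :
    ∫ p in D ×ˢ Set.univ, K p ∂μ.prod μ = ∫ p in Set.univ ×ˢ D, K p ∂μ.prod μ := by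
  have := measurableConstVAdd_prod (G := G) (X := X)
  have := vaddInvariantMeasure_prod (G := G) μ
  have hfst : IsAddFundamentalDomain G (Prod.fst ⁻¹' D) (μ.prod μ) :=
    hD.preimage_of_equiv Measure.quasiMeasurePreserving_fst Function.bijective_id fun _ _ => rfl
  have hsnd : IsAddFundamentalDomain G (Prod.snd ⁻¹' D) (μ.prod μ) :=
    hD.preimage_of_equiv Measure.quasiMeasurePreserving_snd Function.bijective_id fun _ _ => rfl
  rw [Set.prod_univ, Set.univ_prod]
  exact hfst.setIntegral_eq hsnd hK

theorem setIntegral_prod_univ_eq_zero_of_antisymm (hD : IsAddFundamentalDomain G D μ)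
    {K : X × X → E} (hK : ∀ (g : G) p, K (g +ᵥ p) = K p) (hanti : ∀ p, K p.swap = -K p) :
    ∫ p in D ×ˢ Set.univ, K p ∂μ.prod μ = 0 := by
  have : IsAddTorsionFree E := .of_isTorsionFree ℝ E
  refine self_eq_neg.mp ?_
  calc ∫ p in D ×ˢ Set.univ, K p ∂μ.prod μ
      = ∫ p in Set.univ ×ˢ D, K p ∂μ.prod μ := setIntegral_prod_univ_eq_univ_prod hD hK
    _ = ∫ p in D ×ˢ Set.univ, K p.swap ∂μ.prod μ := (setIntegral_prod_swap _ _ K).symm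
    _ = -∫ p in D ×ˢ Set.univ, K p ∂μ.prod μ := by simp only [hanti, integral_neg]

end Antisymmetric

/-! ### The Gaussian measure and the law of the proposal -/

lemma setIntegral_Icc_ite_le {E : Type*} [NormedAddCommGroup E] [NormedSpace ℝ E]
    [CompleteSpace E] {r : ℝ} (hr : r ∈ Set.Icc (0 : ℝ) 1) (x : E) :
    ∫ u in Set.Icc (0 : ℝ) 1, (if u ≤ r then x else 0) = r • x := by
  have hIcc : Set.Icc (0 : ℝ) 1 ∩ Set.Iic r = Set.Icc 0 r := by
    rw [← Set.Ici_inter_Iic, Set.inter_assoc, Set.Iic_inter_Iic, inf_of_le_right hr.2,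
      Set.Ici_inter_Iic]
  calc ∫ u in Set.Icc (0 : ℝ) 1, (if u ≤ r then x else 0)
      = ∫ u in Set.Icc (0 : ℝ) 1, (Set.Iic r).indicator (fun _ => x) u := rfl
    _ = ∫ _ in Set.Icc 0 r, x := by rw [setIntegral_indicator measurableSet_Iic, hIcc]
    _ = r • x := by simp [hr.1]

lemma map_withDensity_comp {X Y : Type*} [MeasurableSpace X] [MeasurableSpace Y] (μ : Measure X)
    {g : X → Y} (hg : Measurable g) {f : Y → ENNReal} (hf : Measurable f) :
    (μ.withDensity (f ∘ g)).map g = (μ.map g).withDensity f := by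
  ext s hs
  rw [Measure.map_apply hg hs, withDensity_apply _ (hg hs), withDensity_apply _ hs,
    setLIntegral_map hs hf hg]
  rfl

section Gaussian

variable {E : Type*} [NormedAddCommGroup E] [InnerProductSpace ℝ E] [FiniteDimensional ℝ E]
  [MeasurableSpace E] [BorelSpace E]

lemma integrable_exp_neg_mul_sq_norm {b : ℝ} (hb : 0 < b) :
    Integrable fun v : E => Real.exp (-b * ‖v‖ ^ 2) :=
  .of_integral_ne_zero <| by
    rw [GaussianFourier.integral_rexp_neg_mul_sq_norm hb]
    positivity

lemma integrable_exp_neg_sq_norm_div_two_mul_norm :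
    Integrable fun v : E => Real.exp (-‖v‖ ^ 2 / 2) * ‖v‖ := by
  refine (integrable_exp_neg_mul_sq_norm (E := E) (b := 1 / 4) (by norm_num)).mono'
    (by fun_prop) (.of_forall fun v => ?_)
  have norm_le_exp : ‖v‖ ≤ Real.exp (‖v‖ ^ 2 / 4) := by
    nlinarith [Real.add_one_le_exp (‖v‖ ^ 2 / 4), sq_nonneg (‖v‖ / 2 - 1)]
  calc ‖Real.exp (-‖v‖ ^ 2 / 2) * ‖v‖‖ = Real.exp (-‖v‖ ^ 2 / 2) * ‖v‖ :=
        Real.norm_of_nonneg (by positivity)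
    _ ≤ Real.exp (-‖v‖ ^ 2 / 2) * Real.exp (‖v‖ ^ 2 / 4) := by gcongr
    _ = Real.exp (-(1 / 4) * ‖v‖ ^ 2) := by rw [← Real.exp_add]; ring_nf

end Gaussian

lemma integrable_gauss_iff {n : ℕ} {F : Type*} [NormedAddCommGroup F] [NormedSpace ℝ F]
    {f : En n → F} : Integrable f (gauss n) ↔
      Integrable fun g => ((2 * Real.pi) ^ (-(n : ℝ) / 2) * Real.exp (-‖g‖ ^ 2 / 2)) • f g := by
  rw [gauss, integrable_withDensity_iff_integrable_smul' (by fun_prop) (by simp)]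
  refine integrable_congr (.of_forall fun g => ?_)
  simp only [ENNReal.toReal_ofReal (show 0 ≤ (2 * Real.pi) ^ (-(n : ℝ) / 2) *
    Real.exp (-‖g‖ ^ 2 / 2) by positivity)]

instance isFiniteMeasure_gauss (n : ℕ) : IsFiniteMeasure (gauss n) := by
  rw [← integrable_const_iff_isFiniteMeasure (c := (1 : ℝ)) one_ne_zero, integrable_gauss_iff]
  have := integrable_exp_neg_mul_sq_norm (E := En n) (b := 1 / 2) (by norm_num)
  refine (this.const_mul ((2 * Real.pi) ^ (-(n : ℝ) / 2))).congr (.of_forall fun g => ?_)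
  simp only [smul_eq_mul, mul_one]
  ring_nf

lemma integrable_norm_gauss (n : ℕ) : Integrable (fun g => ‖g‖) (gauss n) := by
  simpa only [integrable_gauss_iff, smul_eq_mul, mul_assoc] using
    (integrable_exp_neg_sq_norm_div_two_mul_norm (E := En n)).const_mul _

section Proposal

variable {n : ℕ} (V : En n → ℝ) {dt : ℝ} (q : En n)

lemma Tker_pos (hdt : 0 < dt) (q' : En n) : 0 < Tker V dt q q' := by
  unfold Tker
  positivity

lemma measurable_Tker (dt : ℝ) : Measurable (Tker V dt q) := by
  unfold Tker
  fun_prop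

lemma measurable_propMove (dt : ℝ) : Measurable (propMove V dt q) := by
  unfold propMove
  fun_prop

lemma sqrt_pow_mul_Tker_propMove (hdt : 0 < dt) (g : En n) :
    √(2 * dt) ^ n * Tker V dt q (propMove V dt q g) =
      (2 * Real.pi) ^ (-(n : ℝ) / 2) * Real.exp (-‖g‖ ^ 2 / 2) := by
  have hnoise : propMove V dt q g - q + dt • gradient V q = √(2 * dt) • g := by
    rw [propMove]
    abel
  have hexp : -‖√(2 * dt) • g‖ ^ 2 / (4 * dt) = -‖g‖ ^ 2 / 2 := by
    rw [norm_smul, mul_pow, Real.norm_eq_abs, sq_abs, Real.sq_sqrt (by positivity)]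
    field_simp
    ring
  have hconst : √(2 * dt) ^ n * (4 * Real.pi * dt) ^ (-(n : ℝ) / 2) =
      (2 * Real.pi) ^ (-(n : ℝ) / 2) := by
    have hdt' : 0 < 2 * dt := by positivity
    calc √(2 * dt) ^ n * (4 * Real.pi * dt) ^ (-(n : ℝ) / 2)
        = (2 * dt) ^ ((n : ℝ) / 2) * ((2 * dt) * (2 * Real.pi)) ^ (-(n : ℝ) / 2) := by
          rw [Real.sqrt_eq_rpow, ← Real.rpow_mul_natCast hdt'.le]
          ring_nf
      _ = (2 * Real.pi) ^ (-(n : ℝ) / 2) := by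
          rw [Real.mul_rpow hdt'.le (by positivity), ← mul_assoc, ← Real.rpow_add hdt', neg_div,
            add_neg_cancel, Real.rpow_zero, one_mul]
  rw [Tker, hnoise, hexp, ← mul_assoc, hconst]

lemma map_propMove_volume (hdt : 0 < dt) :
    (volume : Measure (En n)).map (propMove V dt q) =
      ENNReal.ofReal (√(2 * dt) ^ n)⁻¹ • volume := by
  have hs : 0 < √(2 * dt) := by positivity
  have hcomp : propMove V dt q = (fun x => q - dt • gradient V q + x) ∘ (√(2 * dt) • ·) := rfl
  rw [hcomp, ← Measure.map_map (by fun_prop) (by fun_prop), Measure.map_addHaar_smul _ hs.ne',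
    Measure.map_smul, map_add_left_eq_self, finrank_euclideanSpace_fin, abs_of_pos (by positivity)]

theorem map_propMove_gauss (hdt : 0 < dt) :
    (gauss n).map (propMove V dt q) =
      volume.withDensity fun q' => ENNReal.ofReal (Tker V dt q q') := by
  set c : ℝ := √(2 * dt) ^ n
  have hc : 0 < c := by positivity
  have hT := (measurable_Tker V q dt).ennreal_ofReal
  have hgauss : gauss n = volume.withDensity
      ((ENNReal.ofReal c • fun q' => ENNReal.ofReal (Tker V dt q q')) ∘ propMove V dt q) := by
    refine congrArg _ (funext fun g => ?_)
    rw [← sqrt_pow_mul_Tker_propMove V q hdt, ENNReal.ofReal_mul hc.le]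
    rfl
  rw [hgauss, map_withDensity_comp _ (measurable_propMove V q dt) (hT.const_smul _),
    map_propMove_volume V q hdt, withDensity_smul_measure, withDensity_smul _ hT, smul_smul,
    ← ENNReal.ofReal_mul (by positivity), inv_mul_cancel₀ hc.ne', ENNReal.ofReal_one, one_smul]

variable {F : Type*} [NormedAddCommGroup F] [NormedSpace ℝ F]

lemma measurableEmbedding_propMove (hdt : 0 < dt) : MeasurableEmbedding (propMove V dt q) :=
  (measurableEmbedding_addLeft (q - dt • gradient V q)).comp
    (measurableEmbedding_const_smul₀ (by positivity : √(2 * dt) ≠ 0))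

lemma integral_propMove_gauss (hdt : 0 < dt) (f : En n → F) :
    ∫ g, f (propMove V dt q g) ∂gauss n = ∫ q', Tker V dt q q' • f q' := by
  rw [← (measurableEmbedding_propMove V q hdt).integral_map, map_propMove_gauss V q hdt,
    integral_withDensity_eq_integral_toReal_smul (measurable_Tker V q dt).ennreal_ofReal (by simp)]
  simp only [ENNReal.toReal_ofReal (Tker_pos V q hdt _).le]

lemma integrable_propMove_gauss_iff (hdt : 0 < dt) {f : En n → F} :
    Integrable (fun g => f (propMove V dt q g)) (gauss n) ↔
      Integrable fun q' => Tker V dt q q' • f q' := by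
  rw [← Function.comp_def f, ← (measurableEmbedding_propMove V q hdt).integrable_map_iff,
    map_propMove_gauss V q hdt, integrable_withDensity_iff_integrable_smul'
      (measurable_Tker V q dt).ennreal_ofReal (by simp)]
  simp only [ENNReal.toReal_ofReal (Tker_pos V q hdt _).le]

lemma propMove_sub_self (dt : ℝ) (g : En n) :
    propMove V dt q g - q = (-dt) • gradient V q + √(2 * dt) • g := by
  rw [propMove, neg_smul]
  abel

lemma norm_propMove_sub_self_le (hdt : 0 ≤ dt) (g : En n) :
    ‖propMove V dt q g - q‖ ≤ dt * ‖gradient V q‖ + √(2 * dt) * ‖g‖ := by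
  rw [propMove_sub_self]
  refine (norm_add_le _ _).trans_eq ?_
  rw [norm_smul, norm_smul, norm_neg, Real.norm_of_nonneg hdt,
    Real.norm_of_nonneg (Real.sqrt_nonneg _)]

lemma integrable_norm_propMove_sub_self_bound (dt : ℝ) :
    Integrable (fun g => dt * ‖gradient V q‖ + √(2 * dt) * ‖g‖) (gauss n) :=
  (integrable_const _).add ((integrable_norm_gauss n).const_mul _)

lemma integrable_Tker_mul_norm_sub (hdt : 0 < dt) :
    Integrable fun q' => Tker V dt q q' * ‖q' - q‖ := by
  refine (integrable_propMove_gauss_iff V q hdt (f := fun q' => ‖q' - q‖)).mp ?_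
  refine (integrable_norm_propMove_sub_self_bound V q dt).mono'
    ((measurable_propMove V q dt).sub_const q).norm.aestronglyMeasurable (.of_forall fun g => ?_)
  rw [norm_norm]
  exact norm_propMove_sub_self_le V q hdt.le g

lemma integral_Tker_mul_norm_sub_le (hdt : 0 < dt) :
    ∫ q', Tker V dt q q' * ‖q' - q‖ ≤
      (gauss n).real Set.univ * (dt * ‖gradient V q‖) + √(2 * dt) * ∫ g, ‖g‖ ∂gauss n :=
  calc ∫ q', Tker V dt q q' * ‖q' - q‖ = ∫ g, ‖propMove V dt q g - q‖ ∂gauss n :=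
        (integral_propMove_gauss V q hdt fun q' => ‖q' - q‖).symm
    _ ≤ ∫ g, (dt * ‖gradient V q‖ + √(2 * dt) * ‖g‖) ∂gauss n :=
        integral_mono_of_nonneg (.of_forall fun _ => norm_nonneg _)
          (integrable_norm_propMove_sub_self_bound V q dt)
          (.of_forall (norm_propMove_sub_self_le V q hdt.le))
    _ = _ := by
        rw [integral_add (integrable_const _) ((integrable_norm_gauss n).const_mul _),
          integral_const, integral_const_mul, smul_eq_mul]

end Proposal

/-! ### The stationary flux -/

/-- The unnormalized stationary flux `e^{-V(q)} T(q, q') R(q, q')` of accepted moves of the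
Metropolis chain started from the Gibbs measure. -/
def metropolisFlux {n : ℕ} (V : En n → ℝ) (dt : ℝ) (q q' : En n) : ℝ :=
  Real.exp (-V q) * Tker V dt q q' * Rk V dt q q'

section Flux

variable {n : ℕ} (V : En n → ℝ) {dt : ℝ}

lemma Rk_mem_Icc (hdt : 0 < dt) (q q' : En n) : Rk V dt q q' ∈ Set.Icc (0 : ℝ) 1 := by
  have hT := Tker_pos V q hdt q'
  have hT' := Tker_pos V q' hdt q
  exact ⟨le_min zero_le_one (by positivity), min_le_left _ _⟩

lemma metropolisFlux_eq_min (hdt : 0 < dt) (q q' : En n) :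
    metropolisFlux V dt q q' =
      min (Real.exp (-V q) * Tker V dt q q') (Real.exp (-V q') * Tker V dt q' q) := by
  have h : 0 < Real.exp (-V q) * Tker V dt q q' := mul_pos (Real.exp_pos _) (Tker_pos V q hdt q')
  rw [metropolisFlux, Rk, mul_min_of_nonneg _ _ h.le, mul_one, mul_div_cancel₀ _ h.ne']

theorem metropolisFlux_comm (hdt : 0 < dt) (q q' : En n) :
    metropolisFlux V dt q q' = metropolisFlux V dt q' q := by
  rw [metropolisFlux_eq_min V hdt, metropolisFlux_eq_min V hdt, min_comm]

lemma norm_metropolisFlux_smul_le {F : Type*} [NormedAddCommGroup F] [NormedSpace ℝ F]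
    (hdt : 0 < dt) (q q' : En n) (x : F) :
    ‖metropolisFlux V dt q q' • x‖ ≤ Real.exp (-V q) * (Tker V dt q q' * ‖x‖) := by
  have hT := (Tker_pos V q hdt q').le
  have hR := Rk_mem_Icc V hdt q q'
  have hflux : 0 ≤ metropolisFlux V dt q q' :=
    mul_nonneg (mul_nonneg (Real.exp_pos _).le hT) hR.1
  rw [norm_smul, Real.norm_of_nonneg hflux, ← mul_assoc]
  gcongr
  exact mul_le_of_le_one_right (by positivity) hR.2

theorem exp_neg_smul_EguDelta (hdt : 0 < dt) (q : En n) :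
    Real.exp (-V q) • EguDelta V dt q = ∫ q', metropolisFlux V dt q q' • (q' - q) := by
  have hU (g : En n) : ∫ u in Set.Icc (0 : ℝ) 1, deltaInc V dt q g u =
      Rk V dt q (propMove V dt q g) • (propMove V dt q g - q) := by
    rw [propMove_sub_self]
    exact setIntegral_Icc_ite_le (Rk_mem_Icc V hdt _ _) _
  simp only [EguDelta, hU, metropolisFlux, mul_smul]
  rw [integral_propMove_gauss V q hdt fun q' => Rk V dt q q' • (q' - q)]
  simp only [integral_smul]

end Flux

/-! ### Periodicity -/

lemma gradient_periodic {E : Type*} [NormedAddCommGroup E] [InnerProductSpace ℝ E]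
    [CompleteSpace E] {f : E → ℝ} {v : E} (hf : Function.Periodic f v) :
    Function.Periodic (gradient f) v := fun x => by
  rw [gradient, gradient, ← fderiv_comp_add_right, hf.funext]

lemma metropolisFlux_add_add {n : ℕ} {V : En n → ℝ} {v : En n} (hV : Function.Periodic V v)
    (dt : ℝ) (q q' : En n) :
    metropolisFlux V dt (q + v) (q' + v) = metropolisFlux V dt q q' := by
  simp only [metropolisFlux, Rk, Tker, gradient_periodic hV _, hV _, add_sub_add_right_eq_sub]

lemma periodic_of_mem_closure {A β : Type*} [AddGroup A] {f : A → β} {s : Set A}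
    (hf : ∀ c ∈ s, Function.Periodic f c) {v : A} (hv : v ∈ AddSubgroup.closure s) :
    Function.Periodic f v := by
  induction hv using AddSubgroup.closure_induction with
  | mem c hc => exact hf c hc
  | zero => exact Function.periodic_with_period_zero f
  | add _ _ _ _ hx hy => exact hx.add_period hy
  | neg _ _ hx => exact hx.neg

section Cubic

variable (n : ℕ) (L : ℝ)

/-- The lattice `Lℤⁿ` of periods of the torus `(ℝ/Lℤ)ⁿ`. -/
def cubicLattice : AddSubgroup (En n) :=
  AddSubgroup.closure (Set.range fun i : Fin n => L • EuclideanSpace.single i (1 : ℝ))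

variable {n L}

lemma periodic_of_mem_cubicLattice {β : Type*} {f : En n → β}
    (hf : ∀ (q : En n) (i : Fin n), f (q + L • EuclideanSpace.single i (1 : ℝ)) = f q)
    {v : En n} (hv : v ∈ cubicLattice n L) : Function.Periodic f v :=
  periodic_of_mem_closure (Set.forall_mem_range.mpr fun i q => hf q i) hv

variable (n)

/-- The basis `L e₁, …, L eₙ` of the lattice `Lℤⁿ`. -/
def cubicBasis (hL : L ≠ 0) : Module.Basis (Fin n) ℝ (En n) :=
  (EuclideanSpace.basisFun (Fin n) ℝ).toBasis.isUnitSMul fun _ => isUnit_iff_ne_zero.mpr hL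

lemma span_int_range_cubicBasis (hL : L ≠ 0) :
    (Submodule.span ℤ (Set.range (cubicBasis n hL))).toAddSubgroup = cubicLattice n L := by
  have hbasis : ⇑(cubicBasis n hL) = fun i => L • EuclideanSpace.single i (1 : ℝ) := by
    ext1 i
    simp [cubicBasis, Module.Basis.isUnitSMul_apply]
  rw [Submodule.span_int_eq_addSubgroupClosure, hbasis]
  rfl

lemma fundamentalDomain_cubicBasis (hL : 0 < L) :
    ZSpan.fundamentalDomain (cubicBasis n hL.ne') = Box n L := by
  have hrepr (q : En n) (i : Fin n) : (cubicBasis n hL.ne').repr q i = q i / L := by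
    simp [cubicBasis, Module.Basis.repr_isUnitSMul, Units.smul_def, div_eq_inv_mul]
  ext q
  simp only [Box, Set.mem_ofPred_eq, ZSpan.mem_fundamentalDomain, hrepr, Set.mem_Ico,
    div_lt_one hL, le_div_iff₀ hL, zero_mul]

instance countable_cubicLattice : Countable (cubicLattice n L) := by
  rw [cubicLattice, ← Submodule.span_int_eq_addSubgroupClosure]
  exact inferInstanceAs (Countable (Submodule.span ℤ _))

theorem isAddFundamentalDomain_Box (hL : 0 < L) :
    IsAddFundamentalDomain (cubicLattice n L) (Box n L) volume := by
  rw [← fundamentalDomain_cubicBasis n hL, ← span_int_range_cubicBasis n hL.ne']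
  exact ZSpan.isAddFundamentalDomain' _ _

lemma isBounded_Box (hL : 0 < L) : Bornology.IsBounded (Box n L) := by
  rw [← fundamentalDomain_cubicBasis n hL]
  exact ZSpan.fundamentalDomain_isBounded _

end Cubic

/-! ### Integrability of the displacement flux -/

lemma continuous_gradient_of_contDiff {E : Type*} [NormedAddCommGroup E] [InnerProductSpace ℝ E]
    [CompleteSpace E] {f : E → ℝ} (hf : ContDiff ℝ 1 f) : Continuous (gradient f) :=
  (LinearIsometryEquiv.continuous _).comp (hf.continuous_fderiv one_ne_zero)

section Integrability

variable {n : ℕ} {V : En n → ℝ} {dt : ℝ}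

lemma continuous_metropolisFlux (hV : ContDiff ℝ 1 V) (hdt : 0 < dt) :
    Continuous fun p : En n × En n => metropolisFlux V dt p.1 p.2 := by
  have hVc := hV.continuous
  have hgrad := continuous_gradient_of_contDiff hV
  simp only [metropolisFlux_eq_min V hdt, Tker]
  fun_prop

lemma integrableOn_metropolisFlux_smul_sub (hV : ContDiff ℝ 1 V) (hdt : 0 < dt) {D : Set (En n)}
    (hD : Bornology.IsBounded D) :
    IntegrableOn (fun p : En n × En n => metropolisFlux V dt p.1 p.2 • (p.2 - p.1))
      (D ×ˢ Set.univ) := by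
  have hcont : Continuous fun p : En n × En n => metropolisFlux V dt p.1 p.2 • (p.2 - p.1) :=
    (continuous_metropolisFlux hV hdt).smul (continuous_snd.sub continuous_fst)
  have hdom (q : En n) : Integrable fun q' => Real.exp (-V q) * (Tker V dt q q' * ‖q' - q‖) :=
    (integrable_Tker_mul_norm_sub V q hdt).const_mul _
  have hbound : IntegrableOn (fun q => Real.exp (-V q) *
      ((gauss n).real Set.univ * (dt * ‖gradient V q‖) + √(2 * dt) * ∫ g, ‖g‖ ∂gauss n)) D := by
    have hVc := hV.continuous
    have hgrad := continuous_gradient_of_contDiff hV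
    exact (Continuous.continuousOn (by fun_prop)).integrableOn_compact hD.isCompact_closure
      |>.mono_set subset_closure
  rw [IntegrableOn, Measure.volume_eq_prod, ← Measure.prod_restrict, Measure.restrict_univ,
    integrable_prod_iff hcont.aestronglyMeasurable]
  constructor
  · exact .of_forall fun q => (hdom q).mono' (hcont.comp (.prodMk_right q)).aestronglyMeasurable
      (.of_forall fun q' => norm_metropolisFlux_smul_le V hdt q q' _)
  · refine hbound.mono' hcont.norm.aestronglyMeasurable.integral_prod_right'
      (.of_forall fun q => ?_)
    rw [Real.norm_of_nonneg (integral_nonneg fun _ => norm_nonneg _)]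
    calc ∫ q', ‖metropolisFlux V dt q q' • (q' - q)‖
        ≤ ∫ q', Real.exp (-V q) * (Tker V dt q q' * ‖q' - q‖) :=
          integral_mono_of_nonneg (.of_forall fun _ => norm_nonneg _) (hdom q)
            (.of_forall fun q' => norm_metropolisFlux_smul_le V hdt q q' _)
      _ ≤ _ := by
          rw [integral_const_mul]
          gcongr
          exact integral_Tker_mul_norm_sub_le V q hdt

end Integrability

theorem stmt14_general {n : ℕ} {G : AddSubgroup (En n)} [Countable G] {D : Set (En n)}
    (hD : IsAddFundamentalDomain G D volume) (hbdd : Bornology.IsBounded D) {V : En n → ℝ}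
    (hV : ContDiff ℝ 1 V) (hper : ∀ v ∈ G, Function.Periodic V v) {dt : ℝ} (hdt : 0 < dt) :
    ∫ q in D, Real.exp (-V q) • EguDelta V dt q = 0 := by
  set K : En n × En n → En n := fun p => metropolisFlux V dt p.1 p.2 • (p.2 - p.1)
  have hinv (v : G) (p : En n × En n) : K (v +ᵥ p) = K p := by
    simp [K, AddSubgroup.vadd_def, add_comm (v : En n), metropolisFlux_add_add (hper v v.2)]
  have hanti (p : En n × En n) : K p.swap = -K p := by
    simp only [K, Prod.fst_swap, Prod.snd_swap, metropolisFlux_comm V hdt p.2 p.1, ← smul_neg,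
      neg_sub]
  calc ∫ q in D, Real.exp (-V q) • EguDelta V dt q = ∫ q in D, ∫ q', K (q, q') := by
        simp only [exp_neg_smul_EguDelta V hdt, K]
    _ = ∫ p in D ×ˢ Set.univ, K p ∂volume.prod volume := by
        rw [setIntegral_prod K (integrableOn_metropolisFlux_smul_sub hV hdt hbdd),
          Measure.restrict_univ]
    _ = 0 := setIntegral_prod_univ_eq_zero_of_antisymm hD hinv hanti

theorem stmt14 (n : ℕ) (hn : 1 ≤ n) (L : ℝ) (hL : 0 < L)
    (V : En n → ℝ) (hV : ContDiff ℝ (⊤ : ℕ∞) V)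
    (hper : ∀ (q : En n) (i : Fin n), V (q + L • EuclideanSpace.single i (1 : ℝ)) = V q) :
    ∀ dt : ℝ, 0 < dt → muIntV V L (fun q => EguDelta V dt q) = 0 := by
  intro dt hdt
  rw [muIntV, stmt14_general (isAddFundamentalDomain_Box n hL) (isBounded_Box n hL)
    (hV.of_le (mod_cast le_top)) (fun _ => periodic_of_mem_cubicLattice hper) hdt, smul_zero]
end
end
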